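/- arXiv:2405.07443 — 5 statements merged into one kernel-verified Lean document; each statement's English description precedes it below -/
import Mathlib

section
/- Let n, p ∈ ℕ, let P be a symmetric n×n real matrix, S a symmetric p×p real matrix, C a p×n real matrix and ϱ a p×p real matrix. Set R̄ = ϱ C P Cᵀ ϱᵀ + S, assume R̄ is positive definite, and set K⋆ = P Cᵀ ϱᵀ R̄⁻¹. Define Ξᵤ(K) = (I − K ϱ C) P (I − K ϱ C)ᵀ + K S Kᵀ. Then for every n×p real matrix K, tr(Ξᵤ(K)) ≥ tr(Ξᵤ(K⋆)), with equality if and only if K = K⋆. -/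
open Matrix

/-!
Expanding the updated covariance gives a quadratic polynomial in the gain `K` with leading term
`K * V * Kᴴ`, where `V` is the innovation covariance. Completing the square at the gain `G` with
`G * V = P * Hᴴ` leaves `(K - G) * V * (K - G)ᴴ` as the only term depending on `K`. Each diagonal
entry of this remainder is the positive definite form `V` evaluated at a row of `K - G`, so its
trace is nonnegative and vanishes only when every row does.
-/

section PosDefCongruence

variable {R m n : Type*} [Fintype m]

theorem mul_mul_conjTranspose_apply_self [NonUnitalSemiring R] [Star R]
    (A : Matrix m m R) (B : Matrix n m R) (i : n) :
    (B * A * Bᴴ) i i = B i ⬝ᵥ (A *ᵥ star (B i)) := by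
  rw [Matrix.mul_assoc]
  rfl

variable [Ring R] [StarRing R]

theorem mul_mul_conjTranspose_apply_self_eq_zero_iff [PartialOrder R] {A : Matrix m m R}
    (hA : A.PosDef) (B : Matrix n m R) (i : n) : (B * A * Bᴴ) i i = 0 ↔ B i = 0 := by
  rw [mul_mul_conjTranspose_apply_self]
  refine ⟨fun h => ?_, fun h => by rw [h, zero_dotProduct]⟩
  by_contra hrow
  have hpos := hA.dotProduct_mulVec_pos (star_ne_zero.mpr hrow)
  rw [star_star, h] at hpos
  exact hpos.false

theorem trace_mul_mul_conjTranspose_eq_zero_iff [PartialOrder R] [IsOrderedAddMonoid R]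
    [Fintype n] {A : Matrix m m R} (hA : A.PosDef) (B : Matrix n m R) :
    (B * A * Bᴴ).trace = 0 ↔ B = 0 := by
  have hdiag : 0 ≤ (B * A * Bᴴ).diag := fun _ =>
    (hA.posSemidef.mul_mul_conjTranspose_same B).diag_nonneg
  calc (B * A * Bᴴ).trace = 0
      ↔ (B * A * Bᴴ).diag = 0 := Fintype.sum_eq_zero_iff_of_nonneg hdiag
    _ ↔ ∀ i, B i = 0 :=
        funext_iff.trans (forall_congr' (mul_mul_conjTranspose_apply_self_eq_zero_iff hA B))
    _ ↔ B = 0 := funext_iff.symm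

end PosDefCongruence

section Covariance

variable {R m n : Type*} [Ring R] [StarRing R] [Fintype m] [Fintype n]

/-- The covariance of the innovation `y - H x̂`, for prediction error covariance `P`, measurement
matrix `H` and disturbance covariance `S`. With `H = ϱ C` it is the matrix `R̄` of the paper. -/
def innovationCovariance (P : Matrix n n R) (H : Matrix m n R) (S : Matrix m m R) :
    Matrix m m R :=
  H * P * Hᴴ + S

/-- The filtering error covariance after a measurement update with an arbitrary gain `K` (the
Joseph form). With `H = ϱ C` it is `Ξᵤ(K)` in the paper. -/
def updatedCovariance [DecidableEq n] (P : Matrix n n R) (H : Matrix m n R) (S : Matrix m m R)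
    (K : Matrix n m R) : Matrix n n R :=
  (1 - K * H) * P * (1 - K * H)ᴴ + K * S * Kᴴ

variable [DecidableEq n] {P : Matrix n n R} {H : Matrix m n R} {S : Matrix m m R}
  {G : Matrix n m R}

theorem updatedCovariance_eq_quadratic (P : Matrix n n R) (H : Matrix m n R)
    (S : Matrix m m R) (K : Matrix n m R) :
    updatedCovariance P H S K =
      P - K * (H * P) - P * Hᴴ * Kᴴ + K * innovationCovariance P H S * Kᴴ := by
  simp only [updatedCovariance, innovationCovariance, conjTranspose_sub, conjTranspose_mul,
    conjTranspose_one, Matrix.sub_mul, Matrix.mul_sub, Matrix.mul_add, Matrix.add_mul,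
    Matrix.one_mul, Matrix.mul_one, Matrix.mul_assoc]
  abel

theorem updatedCovariance_eq_add_mul_mul_conjTranspose (hP : P.IsHermitian)
    (hV : (innovationCovariance P H S).IsHermitian)
    (hG : G * innovationCovariance P H S = P * Hᴴ) (K : Matrix n m R) :
    updatedCovariance P H S K =
      updatedCovariance P H S G + (K - G) * innovationCovariance P H S * (K - G)ᴴ := by
  have hGadjoint : innovationCovariance P H S * Gᴴ = H * P := by
    simpa only [conjTranspose_mul, conjTranspose_conjTranspose, hV.eq, hP.eq] using
      congrArg conjTranspose hG
  rw [updatedCovariance_eq_quadratic P H S K, updatedCovariance_eq_quadratic P H S G,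
    ← hGadjoint, ← hG]
  simp only [conjTranspose_sub, Matrix.sub_mul, Matrix.mul_sub, Matrix.mul_assoc]
  abel

end Covariance

section OptimalGain

variable {𝕜 m n : Type*} [Field 𝕜] [PartialOrder 𝕜] [StarRing 𝕜] [Fintype m] [DecidableEq m]
  [Fintype n] {P : Matrix n n 𝕜} {H : Matrix m n 𝕜} {S : Matrix m m 𝕜}

/-- The Kalman-type gain, `K⋆` in the paper when `H = ϱ C`. `Matrix.inv` is zero at singular
matrices, so this is the optimal gain only for an invertible innovation covariance. -/
noncomputable def optimalGain (P : Matrix n n 𝕜) (H : Matrix m n 𝕜) (S : Matrix m m 𝕜) :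
    Matrix n m 𝕜 :=
  P * Hᴴ * (innovationCovariance P H S)⁻¹

theorem optimalGain_mul_innovationCovariance (hV : (innovationCovariance P H S).PosDef) :
    optimalGain P H S * innovationCovariance P H S = P * Hᴴ :=
  nonsing_inv_mul_cancel_right _ _ ((isUnit_iff_isUnit_det _).mp hV.isUnit)

theorem trace_minimized_iff_optimal_gain_general [IsOrderedAddMonoid 𝕜] [DecidableEq n]
    (hP : P.IsHermitian) (hV : (innovationCovariance P H S).PosDef) (K : Matrix n m 𝕜) :
    (updatedCovariance P H S (optimalGain P H S)).trace ≤ (updatedCovariance P H S K).trace ∧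
      ((updatedCovariance P H S K).trace = (updatedCovariance P H S (optimalGain P H S)).trace ↔
        K = optimalGain P H S) := by
  rw [updatedCovariance_eq_add_mul_mul_conjTranspose hP hV.isHermitian
    (optimalGain_mul_innovationCovariance hV) K, trace_add]
  constructor
  · exact le_add_of_nonneg_right (hV.posSemidef.mul_mul_conjTranspose_same _).trace_nonneg
  · rw [add_eq_left, trace_mul_mul_conjTranspose_eq_zero_iff hV, sub_eq_zero]

end OptimalGain

/-- The trace of the updated filtering error covariance
`Ξᵤ(K) = (I − KϱC) P (I − KϱC)ᵀ + K S Kᵀ` is minimized exactly at the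
Kalman-type gain `K⋆ = P Cᵀ ϱᵀ R̄⁻¹`: for every gain `K`,
`tr(Ξᵤ(K)) ≥ tr(Ξᵤ(K⋆))`, with equality iff `K = K⋆`. -/
theorem trace_minimized_iff_optimal_gain {n p : ℕ}
    (P : Matrix (Fin n) (Fin n) ℝ) (S : Matrix (Fin p) (Fin p) ℝ)
    (C : Matrix (Fin p) (Fin n) ℝ) (ρ : Matrix (Fin p) (Fin p) ℝ)
    (hP : P.IsSymm) (hS : S.IsSymm)
    (Rb : Matrix (Fin p) (Fin p) ℝ) (hRb : Rb = ρ * C * P * Cᵀ * ρᵀ + S)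
    (hRbPD : Rb.PosDef)
    (Kstar : Matrix (Fin n) (Fin p) ℝ) (hKstar : Kstar = P * Cᵀ * ρᵀ * Rb⁻¹)
    (Ξᵤ : Matrix (Fin n) (Fin p) ℝ → Matrix (Fin n) (Fin n) ℝ)
    (hΞᵤ : ∀ K, Ξᵤ K = (1 - K * ρ * C) * P * (1 - K * ρ * C)ᵀ + K * S * Kᵀ) :
    ∀ K, (Ξᵤ Kstar).trace ≤ (Ξᵤ K).trace ∧
      ((Ξᵤ K).trace = (Ξᵤ Kstar).trace ↔ K = Kstar) := by
  subst hRb hKstar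
  simpa [hΞᵤ, updatedCovariance, innovationCovariance, optimalGain, Matrix.mul_assoc] using
    trace_minimized_iff_optimal_gain_general (P := P) (H := ρ * C) (S := S) (by simpa using hP)
      (by simpa [innovationCovariance, Matrix.mul_assoc] using hRbPD)
end

section
/- Let n ∈ ℕ, let γ₁, γ₂ > 0 be real numbers, let G be a symmetric positive semidefinite n×n real matrix, and let Ξ : ℕ×ℕ → (symmetric n×n real matrices) satisfy Ξ(l,k) ⪯ γ₁·Ξ(l,k−1) + γ₂·Ξ(l−1,k) + G for all l, k ≥ 1. Define ℸ : ℕ×ℕ → ℝ by ℸ(0,0) = 1, ℸ(0,k) = γ₁·ℸ(0,k−1) for k ≥ 1, ℸ(l,0) = γ₂·ℸ(l−1,0) for l ≥ 1, and ℸ(l,k) = γ₁·ℸ(l,k−1) + γ₂·ℸ(l−1,k) for l, k ≥ 1. Then for all l, k ≥ 1: Ξ(l,k) ⪯ Σ_{s=1}^{l} γ₁·ℸ(l−s, k−1)·Ξ(s,0) + Σ_{t=1}^{k} γ₂·ℸ(l−1, k−t)·Ξ(0,t) + ( Σ_{s=0}^{l−1} Σ_{t=0}^{k−1} ℸ(l−s−1,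 k−t−1) )·G. -/
open Matrix Finset

/-!
The recursive bound is monotone in the two earlier values, so `Ξ` lies below the solution
of the corresponding difference equation with the same boundary values. That solution is found by
superposition: the kernel `ℸ` is the response to a unit impulse at the origin, each boundary value
acts on the interior through a kernel that is `ℸ` delayed by one step and multiplied by `γ₁` or
`γ₂`, and the constant source `G` contributes the double partial sums of `ℸ`.
-/

theorem le_of_monotone_recurrence {M : Type*} [Preorder M] {F : ℕ → ℕ → M → M → M}
    (hF : ∀ l k ⦃a a' : M⦄, a ≤ a' → ∀ ⦃b b' : M⦄, b ≤ b' → F l k a b ≤ F l k a' b')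
    {u v : ℕ → ℕ → M}
    (hu : ∀ l k, u (l + 1) (k + 1) ≤ F l k (u (l + 1) k) (u l (k + 1)))
    (hv : ∀ l k, F l k (v (l + 1) k) (v l (k + 1)) ≤ v (l + 1) (k + 1))
    (hleft : ∀ l, u (l + 1) 0 ≤ v (l + 1) 0) (hbot : ∀ k, u 0 (k + 1) ≤ v 0 (k + 1)) :
    ∀ l k, u l (k + 1) ≤ v l (k + 1)
  | 0, k => hbot k
  | l + 1, 0 =>
    (hu l 0).trans <| (hF l 0 (hleft l)
      (le_of_monotone_recurrence hF hu hv hleft hbot l 0)).trans (hv l 0)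
  | l + 1, k + 1 =>
    (hu l (k + 1)).trans <| (hF l (k + 1)
      (le_of_monotone_recurrence hF hu hv hleft hbot (l + 1) k)
      (le_of_monotone_recurrence hF hu hv hleft hbot l (k + 1))).trans (hv l (k + 1))

theorem sum_range_sum_range_reflect {M : Type*} [AddCommMonoid M] (f : ℕ → ℕ → M) (l k : ℕ) :
    ∑ s ∈ range l, ∑ t ∈ range k, f (l - s - 1) (k - t - 1) =
      ∑ s ∈ range l, ∑ t ∈ range k, f s t := by
  simp only [Nat.sub_right_comm _ _ 1]
  rw [sum_range_reflect (fun s => ∑ t ∈ range k, f s (k - 1 - t))]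
  exact sum_congr rfl fun s _ => sum_range_reflect (f s) k

section Kernel

variable {R : Type*} [CommSemiring R] {γ₁ γ₂ : R} {d : ℕ → ℕ → R}

/-- The impulse response of the recursion `u (l + 1) (k + 1) = γ₁ u (l + 1) k + γ₂ u l (k + 1)`:
the solution with a unit impulse at `(0, 0)`, where values at negative indices count as `0`. -/
structure IsGronwallKernel (γ₁ γ₂ : R) (d : ℕ → ℕ → R) : Prop where
  zero_zero : d 0 0 = 1
  zero_succ : ∀ k, d 0 (k + 1) = γ₁ * d 0 k
  succ_zero : ∀ l, d (l + 1) 0 = γ₂ * d l 0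
  succ_succ : ∀ l k, d (l + 1) (k + 1) = γ₁ * d (l + 1) k + γ₂ * d l (k + 1)

/-- The weight at offset `l` along the boundary and depth `k` of a boundary value: it restricts to
a unit impulse on the boundary `k = 0`, and is `γ d` delayed by one step in the interior. -/
def boundaryKernel (γ : R) (d : ℕ → ℕ → R) : ℕ → ℕ → R
  | 0, 0 => 1
  | _ + 1, 0 => 0
  | l, k + 1 => γ * d l k

namespace IsGronwallKernel

theorem swap (hd : IsGronwallKernel γ₁ γ₂ d) : IsGronwallKernel γ₂ γ₁ fun l k => d k l where
  zero_zero := hd.zero_zero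
  zero_succ := hd.succ_zero
  succ_zero := hd.zero_succ
  succ_succ l k := (hd.succ_succ k l).trans (add_comm _ _)

theorem boundaryKernel_zero_succ (hd : IsGronwallKernel γ₁ γ₂ d) (k : ℕ) :
    boundaryKernel γ₁ d 0 (k + 1) = γ₁ * boundaryKernel γ₁ d 0 k := by
  cases k with
  | zero => simp only [boundaryKernel, hd.zero_zero]
  | succ k => simp only [boundaryKernel, hd.zero_succ]

theorem boundaryKernel_succ_succ (hd : IsGronwallKernel γ₁ γ₂ d) (l k : ℕ) :
    boundaryKernel γ₁ d (l + 1) (k + 1) =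
      γ₁ * boundaryKernel γ₁ d (l + 1) k + γ₂ * boundaryKernel γ₁ d l (k + 1) := by
  cases k with
  | zero => simp only [boundaryKernel, hd.succ_zero]; ring
  | succ k => simp only [boundaryKernel, hd.succ_succ]; ring

theorem sum_range_zero_succ (hd : IsGronwallKernel γ₁ γ₂ d) (k : ℕ) :
    ∑ t ∈ range (k + 1), d 0 t = γ₁ * ∑ t ∈ range k, d 0 t + 1 := by
  simp only [sum_range_succ', hd.zero_succ, hd.zero_zero, mul_sum]

theorem sum_range_succ_succ (hd : IsGronwallKernel γ₁ γ₂ d) (l k : ℕ) :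
    ∑ t ∈ range (k + 1), d (l + 1) t =
      γ₁ * ∑ t ∈ range k, d (l + 1) t + γ₂ * ∑ t ∈ range (k + 1), d l t := by
  simp only [sum_range_succ', hd.succ_succ, hd.succ_zero, sum_add_distrib, mul_add, mul_sum,
    add_assoc]

theorem sum_range_sum_range_succ_succ (hd : IsGronwallKernel γ₁ γ₂ d) (l k : ℕ) :
    ∑ s ∈ range (l + 1), ∑ t ∈ range (k + 1), d s t =
      γ₁ * ∑ s ∈ range (l + 1), ∑ t ∈ range k, d s t +
        γ₂ * ∑ s ∈ range l, ∑ t ∈ range (k + 1), d s t + 1 := by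
  rw [sum_range_succ', sum_range_succ' (fun s => ∑ t ∈ range k, d s t), hd.sum_range_zero_succ]
  simp only [hd.sum_range_succ_succ, sum_add_distrib, ← mul_sum]
  ring

end IsGronwallKernel

section Response

variable {M : Type*} [AddCommMonoid M] [Module R M]

/-- The contribution of the values `x 1, x 2, …` on the boundary `k = 0` to the solution at
`(l, k)`. -/
def boundaryResponse (γ : R) (d : ℕ → ℕ → R) (x : ℕ → M) (l k : ℕ) : M :=
  ∑ s ∈ Icc 1 l, boundaryKernel γ d (l - s) k • x s

theorem boundaryResponse_zero_left (γ : R) (d : ℕ → ℕ → R) (x : ℕ → M) (k : ℕ) :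
    boundaryResponse γ d x 0 k = 0 :=
  sum_empty

theorem boundaryResponse_succ_left (γ : R) (d : ℕ → ℕ → R) (x : ℕ → M) (l k : ℕ) :
    boundaryResponse γ d x (l + 1) k =
      ∑ s ∈ Icc 1 l, boundaryKernel γ d (l - s + 1) k • x s +
        boundaryKernel γ d 0 k • x (l + 1) := by
  rw [boundaryResponse, sum_Icc_succ_top (Nat.le_add_left 1 l), Nat.sub_self]
  congr 1
  refine sum_congr rfl fun s hs => ?_
  rw [Nat.sub_add_comm (mem_Icc.1 hs).2]

theorem boundaryResponse_succ_zero (γ : R) (d : ℕ → ℕ → R) (x : ℕ → M) (l : ℕ) :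
    boundaryResponse γ d x (l + 1) 0 = x (l + 1) := by
  simp only [boundaryResponse_succ_left, boundaryKernel, zero_smul, sum_const_zero, one_smul,
    zero_add]

theorem IsGronwallKernel.boundaryResponse_succ_succ (hd : IsGronwallKernel γ₁ γ₂ d) (x : ℕ → M)
    (l k : ℕ) :
    boundaryResponse γ₁ d x (l + 1) (k + 1) =
      γ₁ • boundaryResponse γ₁ d x (l + 1) k + γ₂ • boundaryResponse γ₁ d x l (k + 1) := by
  rw [boundaryResponse_succ_left, boundaryResponse_succ_left, boundaryResponse]
  simp only [hd.boundaryKernel_zero_succ, hd.boundaryKernel_succ_succ, add_smul, mul_smul,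
    sum_add_distrib, smul_add, smul_sum]
  exact add_right_comm _ _ _

/-- The solution of `u (l + 1) (k + 1) = γ₁ u (l + 1) k + γ₂ u l (k + 1) + g` with boundary values
`u l 0 = x l` and `u 0 k = y k` for `l, k ≥ 1`, when `d` is the kernel of the recursion. -/
def gronwallMajorant (γ₁ γ₂ : R) (d : ℕ → ℕ → R) (x y : ℕ → M) (g : M) (l k : ℕ) : M :=
  boundaryResponse γ₁ d x l k + boundaryResponse γ₂ (fun i j => d j i) y k l +
    (∑ s ∈ range l, ∑ t ∈ range k, d s t) • g

theorem gronwallMajorant_succ_zero (γ₁ γ₂ : R) (d : ℕ → ℕ → R) (x y : ℕ → M) (g : M) (l : ℕ) :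
    gronwallMajorant γ₁ γ₂ d x y g (l + 1) 0 = x (l + 1) := by
  simp only [gronwallMajorant, boundaryResponse_succ_zero, boundaryResponse_zero_left, range_zero,
    sum_empty, sum_const_zero, zero_smul, add_zero]

theorem gronwallMajorant_zero_succ (γ₁ γ₂ : R) (d : ℕ → ℕ → R) (x y : ℕ → M) (g : M) (k : ℕ) :
    gronwallMajorant γ₁ γ₂ d x y g 0 (k + 1) = y (k + 1) := by
  simp only [gronwallMajorant, boundaryResponse_succ_zero, boundaryResponse_zero_left, range_zero,
    sum_empty, zero_smul, zero_add, add_zero]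

theorem IsGronwallKernel.gronwallMajorant_succ_succ (hd : IsGronwallKernel γ₁ γ₂ d)
    (x y : ℕ → M) (g : M) (l k : ℕ) :
    gronwallMajorant γ₁ γ₂ d x y g (l + 1) (k + 1) =
      γ₁ • gronwallMajorant γ₁ γ₂ d x y g (l + 1) k +
        γ₂ • gronwallMajorant γ₁ γ₂ d x y g l (k + 1) + g := by
  simp only [gronwallMajorant, hd.boundaryResponse_succ_succ, hd.swap.boundaryResponse_succ_succ,
    hd.sum_range_sum_range_succ_succ]
  module

theorem gronwallMajorant_of_one_le (γ₁ γ₂ : R) (d : ℕ → ℕ → R) (x y : ℕ → M) (g : M) {l k : ℕ}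
    (hl : 1 ≤ l) (hk : 1 ≤ k) :
    gronwallMajorant γ₁ γ₂ d x y g l k =
      ∑ s ∈ Icc 1 l, (γ₁ * d (l - s) (k - 1)) • x s +
        ∑ t ∈ Icc 1 k, (γ₂ * d (l - 1) (k - t)) • y t +
        (∑ s ∈ range l, ∑ t ∈ range k, d (l - s - 1) (k - t - 1)) • g := by
  obtain ⟨l, rfl⟩ := Nat.exists_eq_add_of_le' hl
  obtain ⟨k, rfl⟩ := Nat.exists_eq_add_of_le' hk
  simp only [gronwallMajorant, boundaryResponse, boundaryKernel, sum_range_sum_range_reflect,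
    Nat.add_sub_cancel]

theorem two_dim_gronwall_covariance_bound_general [Preorder R] [Preorder M] [IsOrderedAddMonoid M]
    [PosSMulMono R M] (hγ₁ : 0 ≤ γ₁) (hγ₂ : 0 ≤ γ₂) {g : M} {u : ℕ → ℕ → M}
    (hu : ∀ l k, u (l + 1) (k + 1) ≤ γ₁ • u (l + 1) k + γ₂ • u l (k + 1) + g)
    (hd : IsGronwallKernel γ₁ γ₂ d) {l k : ℕ} (hl : 1 ≤ l) (hk : 1 ≤ k) :
    u l k ≤ ∑ s ∈ Icc 1 l, (γ₁ * d (l - s) (k - 1)) • u s 0 +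
      ∑ t ∈ Icc 1 k, (γ₂ * d (l - 1) (k - t)) • u 0 t +
      (∑ s ∈ range l, ∑ t ∈ range k, d (l - s - 1) (k - t - 1)) • g := by
  rw [← gronwallMajorant_of_one_le γ₁ γ₂ d (u · 0) (u 0 ·) g hl hk]
  obtain ⟨k, rfl⟩ := Nat.exists_eq_add_of_le' hk
  refine le_of_monotone_recurrence (F := fun _ _ a b => γ₁ • a + γ₂ • b + g) ?_ hu
    (fun l k => (hd.gronwallMajorant_succ_succ _ _ g l k).ge)
    (fun l => (gronwallMajorant_succ_zero γ₁ γ₂ d (u · 0) (u 0 ·) g l).ge)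
    (fun k => (gronwallMajorant_zero_succ γ₁ γ₂ d (u · 0) (u 0 ·) g k).ge) l k
  intro _ _ a a' ha b b' hb
  gcongr

end Response

end Kernel

/-- Two-dimensional Grönwall-type comparison for the filtering error covariance:
if `Ξ(l,k) ⪯ γ₁ Ξ(l,k−1) + γ₂ Ξ(l−1,k) + G` for all `l,k ≥ 1`, and `ℸ` is the
associated scalar recursion with `ℸ(0,0) = 1`, then for all `l,k ≥ 1`
`Ξ(l,k) ⪯ ∑_{s=1}^{l} γ₁ ℸ(l−s,k−1) Ξ(s,0) + ∑_{t=1}^{k} γ₂ ℸ(l−1,k−t) Ξ(0,t)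
  + (∑_{s=0}^{l−1} ∑_{t=0}^{k−1} ℸ(l−s−1,k−t−1)) G`. -/
theorem two_dim_gronwall_covariance_bound {n : ℕ}
    (γ₁ γ₂ : ℝ) (hγ₁ : 0 < γ₁) (hγ₂ : 0 < γ₂)
    (G : Matrix (Fin n) (Fin n) ℝ) (hG : G.PosSemidef)
    (Ξ : ℕ → ℕ → Matrix (Fin n) (Fin n) ℝ)
    (hΞsymm : ∀ l k, (Ξ l k).IsSymm)
    (hΞrec : ∀ l k : ℕ,
      (γ₁ • Ξ (l + 1) k + γ₂ • Ξ l (k + 1) + G - Ξ (l + 1) (k + 1)).PosSemidef)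
    (ℸ : ℕ → ℕ → ℝ)
    (hℸ00 : ℸ 0 0 = 1)
    (hℸ0k : ∀ k : ℕ, ℸ 0 (k + 1) = γ₁ * ℸ 0 k)
    (hℸl0 : ∀ l : ℕ, ℸ (l + 1) 0 = γ₂ * ℸ l 0)
    (hℸlk : ∀ l k : ℕ, ℸ (l + 1) (k + 1) = γ₁ * ℸ (l + 1) k + γ₂ * ℸ l (k + 1)) :
    ∀ l k : ℕ, 1 ≤ l → 1 ≤ k →
      ((∑ s ∈ Finset.Icc 1 l, (γ₁ * ℸ (l - s) (k - 1)) • Ξ s 0)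
        + (∑ t ∈ Finset.Icc 1 k, (γ₂ * ℸ (l - 1) (k - t)) • Ξ 0 t)
        + (∑ s ∈ Finset.range l, ∑ t ∈ Finset.range k,
            ℸ (l - s - 1) (k - t - 1)) • G
        - Ξ l k).PosSemidef := by
  open scoped MatrixOrder in
  exact fun l k hl hk => Matrix.le_iff.1 <|
    two_dim_gronwall_covariance_bound_general hγ₁.le hγ₂.le
      (fun l k => Matrix.le_iff.2 (hΞrec l k)) ⟨hℸ00, hℸ0k, hℸl0, hℸlk⟩ hl hk
end

section
/- Let P be a symmetric positive definite n×n real matrix, R a symmetric positive definite p×p real matrix, D a symmetric positive semidefinite p×p real matrix, and C a p×n real matrix. For ρ ∈ (0,1] define R̄(ρ) = ρ²·(C P Cᵀ + R) + ρ(1−ρ)·D. Then R̄(ρ) is positive definite for every ρ ∈ (0,1], and the function f(ρ) = tr(P) − ρ²·tr( P Cᵀ R̄(ρ)⁻¹ C P ) is differentiable on (0,1) with derivative f′(ρ) = − tr( K(ρ) D K(ρ)ᵀ ), where K(ρ) = ρ·P Cᵀ R̄(ρ)⁻¹; in particular f′(ρ) ≤ 0 on (0,1). -/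
open Matrix Set

/-! For `ρ ≠ 0` one has `R̄(ρ) = ρ² (S + (ρ⁻¹ - 1) D)` with `S = C P Cᵀ + R`, so the prefactor
`ρ²` of `f` is absorbed by the inverse: `ρ² R̄(ρ)⁻¹ = (S + (ρ⁻¹ - 1) D)⁻¹`. The matrix on the right
depends on `ρ` only through `ρ⁻¹ D`, and the rule `(M⁻¹)' = -M⁻¹ M' M⁻¹` gives the derivative
`ρ² R̄(ρ)⁻¹ D R̄(ρ)⁻¹`. Sandwiching it between `P Cᵀ` and its transpose produces `K(ρ) D K(ρ)ᵀ`. -/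

section Inverse

variable {m α : Type*} [Fintype m] [DecidableEq m] [Field α]

theorem matrix_inv_smul_of_ne_zero {k : α} (hk : k ≠ 0) (A : Matrix m m α) :
    (k • A)⁻¹ = k⁻¹ • A⁻¹ := by
  have inv_scalar : (k • (1 : Matrix m m α))⁻¹ = k⁻¹ • 1 :=
    Matrix.inv_eq_right_inv (by rw [smul_mul_smul_comm, mul_inv_cancel₀ hk, mul_one, one_smul])
  rw [← mul_one A, ← Matrix.mul_smul, Matrix.mul_inv_rev, inv_scalar, mul_one, smul_one_mul]

end Inverse

section Calculus

variable {𝕜 : Type*} [NontriviallyNormedField 𝕜]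

theorem hasDerivAt_ringInverse_comp {A : Type*} [NormedRing A] [HasSummableGeomSeries A]
    [NormedAlgebra 𝕜 A] {g : 𝕜 → A} {g' : A} {x : 𝕜} (hg : HasDerivAt g g' x)
    (hx : IsUnit (g x)) :
    HasDerivAt (fun t => Ring.inverse (g t))
      (-(Ring.inverse (g x) * g' * Ring.inverse (g x))) x := by
  obtain ⟨u, hu⟩ := hx
  have h := (hu ▸ hasFDerivAt_ringInverse (𝕜 := 𝕜) u).comp_hasDerivAt x hg
  simpa [Function.comp_def, ← hu] using h

open scoped Matrix.Norms.Operator in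
theorem hasDerivAt_trace_mul_mul [CompleteSpace 𝕜] {k l m : Type*} [Fintype k] [Fintype l]
    [Fintype m] {A : 𝕜 → Matrix l m 𝕜} {A' : Matrix l m 𝕜} {x : 𝕜} (hA : HasDerivAt A A' x)
    (B : Matrix k l 𝕜) (E : Matrix m k 𝕜) :
    HasDerivAt (fun t => (B * A t * E).trace) (B * A' * E).trace x := by
  let traceSandwich : Matrix l m 𝕜 →ₗ[𝕜] 𝕜 :=
    traceLinearMap k 𝕜 𝕜 ∘ₗ mulRightLinearMap k 𝕜 E ∘ₗ mulLeftLinearMap m 𝕜 B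
  exact traceSandwich.toContinuousLinearMap.hasFDerivAt.comp_hasDerivAt x hA

end Calculus

theorem trace_mul_mul_transpose_nonneg {m n : Type*} [Fintype m] [Fintype n]
    {D : Matrix m m ℝ} (hD : D.PosSemidef) (K : Matrix n m ℝ) : 0 ≤ (K * D * Kᵀ).trace := by
  rw [← Matrix.conjTranspose_eq_transpose_of_trivial]
  exact (hD.mul_mul_conjTranspose_same K).trace_nonneg

section InnovationCov

variable {m α : Type*}

/-- The innovation covariance `R̄(ρ) = ρ² S + ρ(1 - ρ) D`, where `S` is its value at `ρ = 1`. -/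
def innovationCov [Ring α] (S D : Matrix m m α) (ρ : α) : Matrix m m α :=
  ρ ^ 2 • S + (ρ * (1 - ρ)) • D

theorem isSymm_innovationCov [Ring α] {S D : Matrix m m α} (hS : S.IsSymm) (hD : D.IsSymm)
    (ρ : α) : (innovationCov S D ρ).IsSymm :=
  (hS.smul _).add (hD.smul _)

theorem posDef_innovationCov {S D : Matrix m m ℝ} (hS : S.PosDef) (hD : D.PosSemidef) {ρ : ℝ}
    (hρ : ρ ∈ Ioc (0 : ℝ) 1) : (innovationCov S D ρ).PosDef :=
  (hS.smul (pow_pos hρ.1 2)).add_posSemidef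
    (hD.smul (mul_nonneg hρ.1.le (sub_nonneg.2 hρ.2)))

theorem innovationCov_eq_sq_smul [Field α] (S D : Matrix m m α) {ρ : α} (hρ : ρ ≠ 0) :
    innovationCov S D ρ = ρ ^ 2 • (S + (ρ⁻¹ - 1) • D) := by
  rw [innovationCov, smul_add, smul_smul]
  congr 2
  field_simp

variable [Fintype m] [DecidableEq m]

theorem sq_smul_innovationCov_inv [Field α] (S D : Matrix m m α) {ρ : α} (hρ : ρ ≠ 0) :
    ρ ^ 2 • (innovationCov S D ρ)⁻¹ = (S + (ρ⁻¹ - 1) • D)⁻¹ := by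
  have hρ2 : ρ ^ 2 ≠ 0 := pow_ne_zero 2 hρ
  rw [innovationCov_eq_sq_smul S D hρ, matrix_inv_smul_of_ne_zero hρ2, smul_inv_smul₀ hρ2]

variable {𝕜 : Type*} [NontriviallyNormedField 𝕜] [CompleteSpace 𝕜]

-- The choice of norm does not affect the derivative; this one makes the matrices a normed algebra.
open scoped Matrix.Norms.Operator in
theorem hasDerivAt_sq_smul_innovationCov_inv {S D : Matrix m m 𝕜} {ρ : 𝕜} (hρ : ρ ≠ 0)
    (hu : IsUnit (innovationCov S D ρ)) :
    HasDerivAt (fun t => t ^ 2 • (innovationCov S D t)⁻¹)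
      (ρ ^ 2 • ((innovationCov S D ρ)⁻¹ * D * (innovationCov S D ρ)⁻¹)) ρ := by
  have hρ2 : ρ ^ 2 ≠ 0 := pow_ne_zero 2 hρ
  have unit_pencil : IsUnit (S + (ρ⁻¹ - 1) • D) := by
    rw [innovationCov_eq_sq_smul S D hρ] at hu
    exact (isUnit_smul_iff (Units.mk0 _ hρ2) _).1 hu
  have deriv_pencil : HasDerivAt (fun t => S + (t⁻¹ - 1) • D) (-(ρ ^ 2)⁻¹ • D) ρ :=
    (((hasDerivAt_inv hρ).sub_const 1).smul_const D).const_add S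
  -- Completeness for the uniformity of the norm, not for the (equal) product uniformity.
  have complete_matrix : @CompleteSpace (Matrix m m 𝕜) PseudoMetricSpace.toUniformSpace :=
    FiniteDimensional.complete 𝕜 _
  have deriv_inv := hasDerivAt_ringInverse_comp deriv_pencil unit_pencil
  simp only [← Matrix.nonsing_inv_eq_ringInverse] at deriv_inv
  have eq_inv : (fun t => t ^ 2 • (innovationCov S D t)⁻¹) =ᶠ[nhds ρ]
      fun t => (S + (t⁻¹ - 1) • D)⁻¹ :=
    (eventually_ne_nhds hρ).mono fun t ht => sq_smul_innovationCov_inv S D ht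
  refine (deriv_inv.congr_of_eventuallyEq eq_inv).congr_deriv ?_
  rw [← sq_smul_innovationCov_inv S D hρ]
  simp only [neg_smul, mul_neg, neg_mul, neg_neg, Matrix.smul_mul, Matrix.mul_smul, smul_smul,
    inv_mul_cancel₀ hρ2, mul_one]

end InnovationCov

section Gain

variable {m n α : Type*} [Fintype m] [DecidableEq m]

/-- The gain `K(ρ) = ρ B R̄(ρ)⁻¹`; the optimal filter gain is the case `B = P Cᵀ`. -/
noncomputable def innovationGain [CommRing α] (B : Matrix n m α) (S D : Matrix m m α) (ρ : α) :
    Matrix n m α :=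
  ρ • (B * (innovationCov S D ρ)⁻¹)

theorem innovationGain_mul_mul_transpose [CommRing α] (B : Matrix n m α) {S D : Matrix m m α}
    (hS : S.IsSymm) (hD : D.IsSymm) (ρ : α) :
    innovationGain B S D ρ * D * (innovationGain B S D ρ)ᵀ =
      B * (ρ ^ 2 • ((innovationCov S D ρ)⁻¹ * D * (innovationCov S D ρ)⁻¹)) * Bᵀ := by
  have inv_symm : ((innovationCov S D ρ)⁻¹)ᵀ = (innovationCov S D ρ)⁻¹ :=
    (isSymm_innovationCov hS hD ρ).inv
  simp only [innovationGain, Matrix.transpose_smul, Matrix.transpose_mul, inv_symm,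
    Matrix.smul_mul, Matrix.mul_smul, smul_smul, Matrix.mul_assoc, sq]

variable [Fintype n] {𝕜 : Type*} [NontriviallyNormedField 𝕜] [CompleteSpace 𝕜]

theorem hasDerivAt_sq_mul_trace_innovationCov_inv (B : Matrix n m 𝕜) {S D : Matrix m m 𝕜}
    (hS : S.IsSymm) (hD : D.IsSymm) {ρ : 𝕜} (hρ : ρ ≠ 0) (hu : IsUnit (innovationCov S D ρ)) :
    HasDerivAt (fun t => t ^ 2 * (B * (innovationCov S D t)⁻¹ * Bᵀ).trace)
      (innovationGain B S D ρ * D * (innovationGain B S D ρ)ᵀ).trace ρ := by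
  rw [innovationGain_mul_mul_transpose B hS hD]
  simpa only [Matrix.mul_smul, Matrix.smul_mul, Matrix.trace_smul, smul_eq_mul] using
    hasDerivAt_trace_mul_mul (hasDerivAt_sq_smul_innovationCov_inv hρ hu) B Bᵀ

end Gain

theorem performance_index_derivative_general {n p : Type*} [Fintype n] [Fintype p] [DecidableEq p]
    (P : Matrix n n ℝ) (R D : Matrix p p ℝ) (C : Matrix p n ℝ)
    (hP : P.IsSymm) (hS : (C * P * Cᵀ + R).PosDef) (hD : D.PosSemidef)
    (Rb : ℝ → Matrix p p ℝ)
    (hRb : ∀ ρ : ℝ, Rb ρ = ρ ^ 2 • (C * P * Cᵀ + R) + (ρ * (1 - ρ)) • D)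
    (f : ℝ → ℝ)
    (hf : ∀ ρ : ℝ, f ρ = P.trace - ρ ^ 2 * (P * Cᵀ * (Rb ρ)⁻¹ * C * P).trace)
    (K : ℝ → Matrix n p ℝ)
    (hK : ∀ ρ : ℝ, K ρ = ρ • (P * Cᵀ * (Rb ρ)⁻¹)) :
    ∀ ρ ∈ Ioc (0 : ℝ) 1, (Rb ρ).PosDef ∧
      HasDerivAt f (-(K ρ * D * (K ρ)ᵀ).trace) ρ ∧ -(K ρ * D * (K ρ)ᵀ).trace ≤ 0 := by
  intro ρ hρ
  obtain rfl : Rb = innovationCov (C * P * Cᵀ + R) D := funext hRb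
  obtain rfl : K = innovationGain (P * Cᵀ) (C * P * Cᵀ + R) D := funext hK
  have hpos := posDef_innovationCov hS hD hρ
  refine ⟨hpos, ?_, neg_nonpos.2 (trace_mul_mul_transpose_nonneg hD _)⟩
  have hderiv := (hasDerivAt_sq_mul_trace_innovationCov_inv (P * Cᵀ)
    (isHermitian_iff_isSymm.1 hS.isHermitian) (isHermitian_iff_isSymm.1 hD.isHermitian)
    hρ.1.ne' hpos.isUnit).const_sub P.trace
  simpa only [Matrix.transpose_mul, Matrix.transpose_transpose, hP.eq, ← Matrix.mul_assoc,
    ← hf] using hderiv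

/-- Derivative of the performance index in the activation probability: with
`R̄(ρ) = ρ²(C P Cᵀ + R) + ρ(1−ρ)D`, `R̄(ρ)` is positive definite on `(0,1]`, and
`f(ρ) = tr(P) − ρ² tr(P Cᵀ R̄(ρ)⁻¹ C P)` is differentiable on `(0,1)` with
`f′(ρ) = − tr(K(ρ) D K(ρ)ᵀ) ≤ 0`, where `K(ρ) = ρ P Cᵀ R̄(ρ)⁻¹`. -/
theorem performance_index_derivative {n p : ℕ}
    (P : Matrix (Fin n) (Fin n) ℝ) (R : Matrix (Fin p) (Fin p) ℝ)
    (D : Matrix (Fin p) (Fin p) ℝ) (C : Matrix (Fin p) (Fin n) ℝ)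
    (hP : P.PosDef) (hR : R.PosDef) (hD : D.PosSemidef)
    (Rb : ℝ → Matrix (Fin p) (Fin p) ℝ)
    (hRb : ∀ ρ : ℝ, Rb ρ = ρ ^ 2 • (C * P * Cᵀ + R) + (ρ * (1 - ρ)) • D)
    (f : ℝ → ℝ)
    (hf : ∀ ρ : ℝ, f ρ = P.trace - ρ ^ 2 * (P * Cᵀ * (Rb ρ)⁻¹ * C * P).trace)
    (K : ℝ → Matrix (Fin n) (Fin p) ℝ)
    (hK : ∀ ρ : ℝ, K ρ = ρ • (P * Cᵀ * (Rb ρ)⁻¹)) :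
    (∀ ρ ∈ Ioc (0 : ℝ) 1, (Rb ρ).PosDef) ∧
    (∀ ρ ∈ Ioo (0 : ℝ) 1,
      HasDerivAt f (-(K ρ * D * (K ρ)ᵀ).trace) ρ ∧
        -(K ρ * D * (K ρ)ᵀ).trace ≤ 0) := by
  have hS : (C * P * Cᵀ + R).PosDef :=
    hR.posSemidef_add (hP.posSemidef.mul_mul_conjTranspose_same C)
  have main := performance_index_derivative_general P R D C
    (isHermitian_iff_isSymm.1 hP.isHermitian) hS hD Rb hRb f hf K hK
  exact ⟨fun ρ hρ => (main ρ hρ).1, fun ρ hρ => (main ρ (Ioo_subset_Ioc_self hρ)).2⟩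
end

section
/- Let ℏ ∈ ℕ and let ı₀,…,ı_ℏ and ȷ₀,…,ȷ_ℏ be natural numbers with ı₀ = ȷ₀ = 0, ı_s ≤ ȷ_s for all 0 ≤ s ≤ ℏ, and ȷ_s < ı_{s+1} for all 0 ≤ s < ℏ. Let i, j ∈ ℕ with ı_ℏ ≤ i and ȷ_ℏ ≤ j. For 0 ≤ s < ℏ define 𝓜_s = { (l,k) ∈ ℕ² : ı_s ≤ l < ı_{s+1} and ȷ_s ≤ k ≤ j } ∪ { (l,k) ∈ ℕ² : ı_{s+1} ≤ l ≤ i and ȷ_s ≤ k < ȷ_{s+1} }, and define 𝓜_ℏ = { (l,k) ∈ ℕ² : ı_ℏ ≤ l ≤ i and ȷ_ℏ ≤ k ≤ j }. Then the sets 𝓜₀,…,𝓜_ℏ are pairwise disjoint, and for every 0 ≤ c ≤ ℏ one has ⋃_{s=c}^{ℏ} 𝓜_s = { (l,k) ∈ ℕ² : ı_c ≤ l ≤ i and ȷ_c ≤ k ≤ j } = { (l + ı_c, k + ȷ_c) : 0 ≤ l ≤ i − ı_c and 0 ≤ k ≤ j − ȷ_c }. -/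
open Set

/-!
Write `R s` for the rectangle `[im s, i] × [jm s, j]`. The interlacing `im s ≤ jm s < im (s + 1)`
makes both corner coordinates monotone in `s`, so `R (s + 1)` is the upper right part of `R s`, and
`𝓜 s` is the L-shaped strip `R s \ R (s + 1)`, with `𝓜 ℏ = R ℏ`. Peeling off one strip at a time,
the strips `𝓜 c, …, 𝓜 ℏ` fill `R c`; and for `s < t` the strip `𝓜 t` lies in `R (s + 1)`, which
misses `𝓜 s`.
-/

theorem monotoneOn_Iic_of_interlacing {α : Type*} [Preorder α] {f g : ℕ → α} {n : ℕ}
    (hfg : ∀ s ≤ n, f s ≤ g s) (hgf : ∀ s < n, g s ≤ f (s + 1)) :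
    MonotoneOn f (Iic n) ∧ MonotoneOn g (Iic n) :=
  ⟨monotoneOn_of_le_add_one ordConnected_Iic fun s _ hs hs' =>
      (hfg s hs).trans (hgf s hs'),
    monotoneOn_of_le_add_one ordConnected_Iic fun s _ _ hs' =>
      (hgf s hs').trans (hfg (s + 1) hs')⟩

section Peeling

variable {X : Type*} {R M : ℕ → Set X} {n : ℕ}

theorem biUnion_Icc_eq_of_union_succ_eq (hlast : M n = R n)
    (hstep : ∀ s < n, M s ∪ R (s + 1) = R s) {c : ℕ} (hc : c ≤ n) :
    ⋃ s ∈ Icc c n, M s = R c := by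
  induction hc using Nat.decreasingInduction with
  | self => simpa only [Icc_self, biUnion_singleton] using hlast
  | of_succ c hc ih => rw [← insert_Icc_add_one_left_eq_Icc hc.le, biUnion_insert, ih, hstep c hc]

theorem pairwiseDisjoint_Iic_of_union_succ_eq (hlast : M n = R n)
    (hstep : ∀ s < n, M s ∪ R (s + 1) = R s) (hdisj : ∀ s < n, Disjoint (M s) (R (s + 1))) :
    (Iic n).PairwiseDisjoint M := by
  have disjoint_of_lt {s t : ℕ} (hst : s < t) (ht : t ≤ n) : Disjoint (M s) (M t) := by
    have hsn : s < n := hst.trans_le ht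
    have hsub : M t ⊆ R (s + 1) :=
      biUnion_Icc_eq_of_union_succ_eq hlast hstep hsn ▸
        subset_biUnion_of_mem (show t ∈ Icc (s + 1) n from ⟨hst, ht⟩)
    exact (hdisj s hsn).mono_right hsub
  intro s hs t ht hne
  rcases hne.lt_or_gt with hst | hts
  · exact disjoint_of_lt hst ht
  · exact (disjoint_of_lt hts hs).symm

end Peeling

theorem Ico_disjoint_Icc_same {α : Type*} [Preorder α] {a b c : α} :
    Disjoint (Ico a b) (Icc b c) :=
  disjoint_left.2 fun _ hab hbc => hab.2.not_ge hbc.1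

section CornerRegion

variable {α β : Type*}

/-- The L-shaped region left when the rectangle with lower left corner `q` and upper right corner
`r` is cut out of the one with corners `p` and `r`. It is split along the vertical line through `q`:
full-height columns to the left of `q`, and the rows below `q` to its right. -/
def cornerRegion [Preorder α] [Preorder β] (p q r : α × β) : Set (α × β) :=
  Ico p.1 q.1 ×ˢ Icc p.2 r.2 ∪ Icc q.1 r.1 ×ˢ Ico p.2 q.2

theorem disjoint_cornerRegion_Icc [Preorder α] [Preorder β] (p q r : α × β) :
    Disjoint (cornerRegion p q r) (Icc q r) := by
  rw [Icc_prod_eq]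
  exact disjoint_union_left.2
    ⟨disjoint_prod.2 (.inl Ico_disjoint_Icc_same), disjoint_prod.2 (.inr Ico_disjoint_Icc_same)⟩

theorem cornerRegion_union_Icc [LinearOrder α] [LinearOrder β] {p q r : α × β}
    (hpq : p ≤ q) (hqr : q ≤ r) : cornerRegion p q r ∪ Icc q r = Icc p r :=
  calc cornerRegion p q r ∪ Icc q r
      = Ico p.1 q.1 ×ˢ Icc p.2 r.2 ∪ Icc q.1 r.1 ×ˢ (Ico p.2 q.2 ∪ Icc q.2 r.2) := by
        rw [cornerRegion, Icc_prod_eq, union_assoc, prod_union]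
    _ = (Ico p.1 q.1 ∪ Icc q.1 r.1) ×ˢ Icc p.2 r.2 := by
        rw [Ico_union_Icc_eq_Icc hpq.2 hqr.2, union_prod]
    _ = Icc p r := by
        rw [Ico_union_Icc_eq_Icc hpq.1 hqr.1, Icc_prod_eq]

theorem pairwiseDisjoint_and_biUnion_cornerRegion [LinearOrder α] [LinearOrder β]
    {p : ℕ → α × β} {r : α × β} {n : ℕ} {M : ℕ → Set (α × β)}
    (hp : MonotoneOn p (Iic n)) (hr : p n ≤ r)
    (hM : ∀ s < n, M s = cornerRegion (p s) (p (s + 1)) r) (hMn : M n = Icc (p n) r) :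
    (Iic n).PairwiseDisjoint M ∧ ∀ c ≤ n, ⋃ s ∈ Icc c n, M s = Icc (p c) r := by
  have hstep (s : ℕ) (hs : s < n) : M s ∪ Icc (p (s + 1)) r = Icc (p s) r :=
    hM s hs ▸ cornerRegion_union_Icc (hp hs.le hs s.le_succ) ((hp hs self_mem_Iic hs).trans hr)
  have hdisj (s : ℕ) (hs : s < n) : Disjoint (M s) (Icc (p (s + 1)) r) :=
    hM s hs ▸ disjoint_cornerRegion_Icc ..
  let R (s : ℕ) : Set (α × β) := Icc (p s) r
  exact ⟨pairwiseDisjoint_Iic_of_union_succ_eq (R := R) hMn hstep hdisj,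
    fun _ hc => biUnion_Icc_eq_of_union_succ_eq (R := R) hMn hstep hc⟩

theorem cornerRegion_eq_setOf [Preorder α] [Preorder β] (p q r : α × β) :
    cornerRegion p q r =
      {x | p.1 ≤ x.1 ∧ x.1 < q.1 ∧ p.2 ≤ x.2 ∧ x.2 ≤ r.2} ∪
        {x | q.1 ≤ x.1 ∧ x.1 ≤ r.1 ∧ p.2 ≤ x.2 ∧ x.2 < q.2} := by
  ext x
  simp only [cornerRegion, mem_union, mem_prod, mem_Ico, mem_Icc, mem_ofPred_eq, and_assoc]

theorem Icc_prod_eq_setOf [Preorder α] [Preorder β] (p r : α × β) :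
    Icc p r = {x | p.1 ≤ x.1 ∧ x.1 ≤ r.1 ∧ p.2 ≤ x.2 ∧ x.2 ≤ r.2} := by
  ext x
  simp only [Icc_prod_eq, mem_prod, mem_Icc, mem_ofPred_eq, and_assoc]

end CornerRegion

theorem image_add_const_Iic_tsub {α : Type*} [AddCommSemigroup α] [PartialOrder α]
    [CanonicallyOrderedAdd α] [Sub α] [OrderedSub α] {a b : α} (hab : a ≤ b) :
    (· + a) '' Iic (b - a) = Icc a b := by
  refine Subset.antisymm (image_subset_iff.2 fun x hx => ⟨le_add_self, ?_⟩) fun y hy =>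
    ⟨y - a, tsub_le_tsub_right hy.2 a, tsub_add_cancel_of_le hy.1⟩
  calc x + a ≤ b - a + a := by gcongr; exact hx
    _ = b := tsub_add_cancel_of_le hab

theorem region_tiling_identity_general {α β : Type*}
    [AddCommSemigroup α] [LinearOrder α] [CanonicallyOrderedAdd α] [Sub α] [OrderedSub α]
    [AddCommSemigroup β] [LinearOrder β] [CanonicallyOrderedAdd β] [Sub β] [OrderedSub β]
    {n : ℕ} {a : ℕ → α} {b : ℕ → β} {i : α} {j : β}
    (ha : MonotoneOn a (Iic n)) (hb : MonotoneOn b (Iic n)) (hi : a n ≤ i) (hj : b n ≤ j)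
    {M : ℕ → Set (α × β)}
    (hM : ∀ s < n, M s =
      {p | a s ≤ p.1 ∧ p.1 < a (s + 1) ∧ b s ≤ p.2 ∧ p.2 ≤ j} ∪
        {p | a (s + 1) ≤ p.1 ∧ p.1 ≤ i ∧ b s ≤ p.2 ∧ p.2 < b (s + 1)})
    (hMn : M n = {p | a n ≤ p.1 ∧ p.1 ≤ i ∧ b n ≤ p.2 ∧ p.2 ≤ j}) :
    (∀ s ≤ n, ∀ t ≤ n, s ≠ t → Disjoint (M s) (M t)) ∧
    (∀ c ≤ n,
      (⋃ s ∈ Icc c n, M s) = {p | a c ≤ p.1 ∧ p.1 ≤ i ∧ b c ≤ p.2 ∧ p.2 ≤ j} ∧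
      (⋃ s ∈ Icc c n, M s) =
        (fun p : α × β => (p.1 + a c, p.2 + b c)) '' {p | p.1 ≤ i - a c ∧ p.2 ≤ j - b c}) := by
  let corner (s : ℕ) : α × β := (a s, b s)
  have corner_mono : MonotoneOn corner (Iic n) := fun s hs t ht hst =>
    ⟨ha hs ht hst, hb hs ht hst⟩
  have corner_last_le : corner n ≤ (i, j) := ⟨hi, hj⟩
  obtain ⟨hdisj, hunion⟩ := pairwiseDisjoint_and_biUnion_cornerRegion corner_mono corner_last_le
    (fun s hs => (hM s hs).trans (cornerRegion_eq_setOf (corner s) (corner (s + 1)) (i, j)).symm)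
    (hMn.trans (Icc_prod_eq_setOf (corner n) (i, j)).symm)
  refine ⟨fun s hs t ht hst => hdisj hs ht hst, fun c hc => ?_⟩
  have corner_le : corner c ≤ (i, j) := (corner_mono hc self_mem_Iic hc).trans corner_last_le
  rw [hunion c hc]
  exact ⟨Icc_prod_eq_setOf .., (image_add_const_Iic_tsub corner_le).symm⟩

/-- Region-tiling identity for the observation partition reconstruction:
the regions `𝓜₀, …, 𝓜_ℏ` are pairwise disjoint, and for each channel `c`,
`⋃_{s=c}^{ℏ} 𝓜_s` is exactly the rectangle `[im_c, i] × [jm_c, j]`, which is the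
translate by `(im_c, jm_c)` of the delay-free rectangle
`[0, i−im_c] × [0, j−jm_c]`. -/
theorem region_tiling_identity (ℏ : ℕ) (im jm : ℕ → ℕ) (i j : ℕ)
    (him0 : im 0 = 0) (hjm0 : jm 0 = 0)
    (himjm : ∀ s ≤ ℏ, im s ≤ jm s)
    (hjmim : ∀ s < ℏ, jm s < im (s + 1))
    (hi : im ℏ ≤ i) (hj : jm ℏ ≤ j)
    (𝓜 : ℕ → Set (ℕ × ℕ))
    (h𝓜lt : ∀ s < ℏ, 𝓜 s =
      {p : ℕ × ℕ | im s ≤ p.1 ∧ p.1 < im (s + 1) ∧ jm s ≤ p.2 ∧ p.2 ≤ j}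
        ∪ {p : ℕ × ℕ | im (s + 1) ≤ p.1 ∧ p.1 ≤ i ∧ jm s ≤ p.2 ∧ p.2 < jm (s + 1)})
    (h𝓜ℏ : 𝓜 ℏ = {p : ℕ × ℕ | im ℏ ≤ p.1 ∧ p.1 ≤ i ∧ jm ℏ ≤ p.2 ∧ p.2 ≤ j}) :
    (∀ s ≤ ℏ, ∀ t ≤ ℏ, s ≠ t → Disjoint (𝓜 s) (𝓜 t)) ∧
    (∀ c ≤ ℏ,
      (⋃ s ∈ Icc c ℏ, 𝓜 s)
        = {p : ℕ × ℕ | im c ≤ p.1 ∧ p.1 ≤ i ∧ jm c ≤ p.2 ∧ p.2 ≤ j} ∧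
      (⋃ s ∈ Icc c ℏ, 𝓜 s)
        = (fun p : ℕ × ℕ => (p.1 + im c, p.2 + jm c)) ''
            {p : ℕ × ℕ | p.1 ≤ i - im c ∧ p.2 ≤ j - jm c}) :=
  have ⟨him, hjm⟩ := monotoneOn_Iic_of_interlacing himjm fun s hs => (hjmim s hs).le
  region_tiling_identity_general him hjm hi hj h𝓜lt h𝓜ℏ
end

section
/- Let V be a real vector space. Let ℏ ∈ ℕ and let ı₀,…,ı_ℏ and ȷ₀,…,ȷ_ℏ be natural numbers with ı₀ = ȷ₀ = 0, ı_s ≤ ȷ_s for all 0 ≤ s ≤ ℏ, and ȷ_s < ı_{s+1} for all 0 ≤ s < ℏ. Let i, j ∈ ℕ with ı_ℏ ≤ i and ȷ_ℏ ≤ j, and set i_t = i − ı_{ℏ−t} and j_t = j − ȷ_{ℏ−t} for 0 ≤ t ≤ ℏ. Define 𝓝₀ = { (l,k) ∈ ℕ² : l ≤ i₀, k ≤ j₀ } and, for 1 ≤ t ≤ ℏ, 𝓝_t = { (l,k) : l ≤ i_t, k ≤ j_t } \ { (l,k) : l ≤ i_{t−1}, k ≤ j_{t−1} }. For 0 ≤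 s < ℏ define 𝓜_s = { (l,k) : ı_s ≤ l < ı_{s+1}, ȷ_s ≤ k ≤ j } ∪ { (l,k) : ı_{s+1} ≤ l ≤ i, ȷ_s ≤ k < ȷ_{s+1} }, and 𝓜_ℏ = { (l,k) : ı_ℏ ≤ l ≤ i, ȷ_ℏ ≤ k ≤ j }. Then for every family of vectors ȳ : {0,…,ℏ} × ℕ × ℕ → V, the ℝ-linear span of { ȳ(c, l + ı_c, k + ȷ_c) : 0 ≤ s ≤ ℏ, 0 ≤ c ≤ s, (l,k) ∈ 𝓝_{ℏ−s} } equals the ℝ-linear span of { ȳ(c, l, k) : 0 ≤ s ≤ ℏ, 0 ≤ c ≤ s, (l,k) ∈ 𝓜_s }. -/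
open Set

/-!
Fix a channel `c`. Both families of index regions are the consecutive differences of a decreasing
sequence of sets: the rectangles `Icc (δ s) h` for the delayed measurements, the rectangles
`Iic (h - δ s)` for the reconstructed ones, where `δ s` is the delay of channel `s` and `h` the
horizon. Channel `c` is active on the differences of index `s ≥ c`, whose union telescopes to the
rectangle of index `c`. Translation by `δ c` maps `Iic (h - δ c)` onto `Icc (δ c) h`, so channel `c`
contributes the same measurements to both sequences.
-/

section Layering

variable {α : Type*} {A L : ℕ → Set α} {n : ℕ}

/-- `L` is the partition of a decreasing sequence `A 0 ⊇ A 1 ⊇ ⋯ ⊇ A n` into its consecutive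
differences, the last layer being all of `A n`. It describes the index regions `𝓜 s` and
`𝒩 (ℏ - s)`; the inclusions themselves are not part of the definition. -/
structure IsLayering (n : ℕ) (A L : ℕ → Set α) : Prop where
  eq_sdiff : ∀ s < n, L s = A s \ A (s + 1)
  eq_last : L n = A n

theorem IsLayering.biUnion_Icc_eq (hL : IsLayering n A L) (hA : AntitoneOn A (Iic n))
    {c : ℕ} (hc : c ≤ n) : ⋃ s ∈ Icc c n, L s = A c := by
  induction hc using Nat.decreasingInduction with
  | self => simp [hL.eq_last]
  | of_succ c hc ih =>
    calc ⋃ s ∈ Icc c n, L s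
        = L c ∪ ⋃ s ∈ Icc (c + 1) n, L s := by
          rw [← insert_Icc_add_one_left_eq_Icc hc.le, biUnion_insert]
      _ = A c \ A (c + 1) ∪ A (c + 1) := by rw [ih, hL.eq_sdiff c hc]
      _ = A c := sdiff_union_of_subset (hA hc.le hc c.le_succ)

theorem IsLayering.of_reversed (h_zero : L 0 = A n)
    (h_sdiff : ∀ t, 1 ≤ t → t ≤ n → L t = A (n - t) \ A (n - (t - 1))) :
    IsLayering n A fun s => L (n - s) where
  eq_sdiff s hs := by
    rw [h_sdiff (n - s) (by omega) (by omega), show n - (n - s) = s by omega,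
      show n - (n - s - 1) = s + 1 by omega]
  eq_last := by rw [Nat.sub_self, h_zero]

/-- The activated observation sequence: on the layer `L s` exactly the channels `c ≤ s` have
delivered data, and `f c p` is the measurement of channel `c` at the point `p`. -/
def activatedObservations {V : Type*} (n : ℕ) (L : ℕ → Set α) (f : ℕ → α → V) : Set V :=
  {v | ∃ s ≤ n, ∃ c ≤ s, ∃ p ∈ L s, v = f c p}

theorem IsLayering.activatedObservations_eq {V : Type*} (hL : IsLayering n A L)
    (hA : AntitoneOn A (Iic n)) (f : ℕ → α → V) :
    activatedObservations n L f = ⋃ c ∈ Iic n, f c '' A c := by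
  have by_channel : activatedObservations n L f = ⋃ c ∈ Iic n, f c '' ⋃ s ∈ Icc c n, L s := by
    ext v
    simp only [activatedObservations, mem_ofPred_eq, mem_iUnion, mem_image, mem_Iic, mem_Icc,
      exists_prop]
    constructor
    · rintro ⟨s, hs, c, hc, p, hp, rfl⟩
      exact ⟨c, hc.trans hs, p, ⟨s, ⟨hc, hs⟩, hp⟩, rfl⟩
    · rintro ⟨c, -, p, ⟨s, ⟨hc, hs⟩, hp⟩, rfl⟩
      exact ⟨s, hs, c, hc, p, hp, rfl⟩
  rw [by_channel]
  exact iUnion₂_congr fun c hc => by rw [hL.biUnion_Icc_eq hA hc]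

end Layering

section Translation

variable {G : Type*} [AddCommMonoid G] [PartialOrder G] [IsOrderedCancelAddMonoid G]
  [CanonicallyOrderedAdd G] [Sub G] [OrderedSub G]

theorem image_add_const_Iic_tsub_s13 {a b : G} (hab : a ≤ b) :
    (fun x => x + a) '' Iic (b - a) = Icc a b := by
  have Iic_eq : Iic (b - a) = Icc 0 (b - a) := by ext; simp
  rw [Iic_eq, image_add_const_Icc, zero_add, tsub_add_cancel_of_le hab]

theorem reconstructed_observations_span_eq_general {V : Type*} {n : ℕ} {δ : ℕ → G} {h : G}
    (hδ : MonotoneOn δ (Iic n)) (hh : δ n ≤ h) {𝒩 𝓜 : ℕ → Set G}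
    (h𝒩 : IsLayering n (fun s => Iic (h - δ s)) 𝒩)
    (h𝓜 : IsLayering n (fun s => Icc (δ s) h) 𝓜) (y : ℕ → G → V) :
    activatedObservations n 𝒩 (fun c p => y c (p + δ c)) = activatedObservations n 𝓜 y := by
  have anti_Iic : AntitoneOn (fun s => Iic (h - δ s)) (Iic n) := fun _ hs _ ht hst =>
    Iic_subset_Iic.2 (tsub_le_tsub_left (hδ hs ht hst) h)
  have anti_Icc : AntitoneOn (fun s => Icc (δ s) h) (Iic n) := fun _ hs _ ht hst =>
    Icc_subset_Icc_left (hδ hs ht hst)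
  rw [h𝒩.activatedObservations_eq anti_Iic, h𝓜.activatedObservations_eq anti_Icc]
  refine iUnion₂_congr fun c hc => ?_
  have hc_le : δ c ≤ h := (hδ hc self_mem_Iic hc).trans hh
  rw [← image_add_const_Iic_tsub_s13 hc_le, image_image]

end Translation

theorem monotoneOn_Iic_of_interlaced {α : Type*} [Preorder α] {a b : ℕ → α} {n : ℕ}
    (hab : ∀ s ≤ n, a s ≤ b s) (hba : ∀ s < n, b s ≤ a (s + 1)) :
    MonotoneOn a (Iic n) ∧ MonotoneOn b (Iic n) :=
  ⟨monotoneOn_of_le_add_one ordConnected_Iic fun s _ hs hs' => (hab s hs).trans (hba s hs'),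
    monotoneOn_of_le_add_one ordConnected_Iic fun s _ _ hs' => (hba s hs').trans (hab _ hs')⟩

theorem setOf_union_setOf_eq_Icc_sdiff_Icc {α β : Type*} [LinearOrder α] [LinearOrder β]
    {a a' c : α} {b b' d : β} (haa' : a ≤ a') (ha'c : a' ≤ c) (hb'd : b' ≤ d) :
    {p : α × β | a ≤ p.1 ∧ p.1 < a' ∧ b ≤ p.2 ∧ p.2 ≤ d}
        ∪ {p : α × β | a' ≤ p.1 ∧ p.1 ≤ c ∧ b ≤ p.2 ∧ p.2 < b'}
      = Icc (a, b) (c, d) \ Icc (a', b') (c, d) := by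
  ext ⟨l, k⟩
  simp only [mem_union, mem_ofPred_eq, mem_sdiff, mem_Icc, Prod.mk_le_mk]
  grind

theorem isLayering_Icc_of_eq_union {α β : Type*} [LinearOrder α] [LinearOrder β]
    {a : ℕ → α} {b : ℕ → β} {n : ℕ} {c : α} {d : β}
    (ha : MonotoneOn a (Iic n)) (hb : MonotoneOn b (Iic n)) (hc : a n ≤ c) (hd : b n ≤ d)
    {L : ℕ → Set (α × β)}
    (hlt : ∀ s < n, L s =
      {p : α × β | a s ≤ p.1 ∧ p.1 < a (s + 1) ∧ b s ≤ p.2 ∧ p.2 ≤ d}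
        ∪ {p : α × β | a (s + 1) ≤ p.1 ∧ p.1 ≤ c ∧ b s ≤ p.2 ∧ p.2 < b (s + 1)})
    (hlast : L n = {p : α × β | a n ≤ p.1 ∧ p.1 ≤ c ∧ b n ≤ p.2 ∧ p.2 ≤ d}) :
    IsLayering n (fun s => Icc (a s, b s) (c, d)) L where
  eq_sdiff s hs :=
    (hlt s hs).trans <| setOf_union_setOf_eq_Icc_sdiff_Icc (ha hs.le hs s.le_succ)
      ((ha hs self_mem_Iic hs).trans hc) ((hb hs self_mem_Iic hs).trans hd)
  eq_last := by
    ext ⟨l, k⟩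
    simp only [hlast, mem_ofPred_eq, mem_Icc, Prod.mk_le_mk]
    tauto

/-- Lemma 1 of the paper (observation partition reconstruction), componentwise:
the reconstructed delay-free activated observation sequence spans the same
linear space as the original delayed activated observation sequence. -/
theorem reconstructed_observations_span_eq
    (V : Type*) [AddCommGroup V] [Module ℝ V]
    (ℏ : ℕ) (im jm : ℕ → ℕ) (i j : ℕ)
    (him0 : im 0 = 0) (hjm0 : jm 0 = 0)
    (himjm : ∀ s ≤ ℏ, im s ≤ jm s)
    (hjmim : ∀ s < ℏ, jm s < im (s + 1))
    (hi : im ℏ ≤ i) (hj : jm ℏ ≤ j)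
    (𝒩 : ℕ → Set (ℕ × ℕ))
    (h𝒩0 : 𝒩 0 = {p : ℕ × ℕ | p.1 ≤ i - im ℏ ∧ p.2 ≤ j - jm ℏ})
    (h𝒩 : ∀ t, 1 ≤ t → t ≤ ℏ →
      𝒩 t = {p : ℕ × ℕ | p.1 ≤ i - im (ℏ - t) ∧ p.2 ≤ j - jm (ℏ - t)}
        \ {p : ℕ × ℕ | p.1 ≤ i - im (ℏ - (t - 1)) ∧ p.2 ≤ j - jm (ℏ - (t - 1))})
    (𝓜 : ℕ → Set (ℕ × ℕ))
    (h𝓜lt : ∀ s < ℏ, 𝓜 s =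
      {p : ℕ × ℕ | im s ≤ p.1 ∧ p.1 < im (s + 1) ∧ jm s ≤ p.2 ∧ p.2 ≤ j}
        ∪ {p : ℕ × ℕ | im (s + 1) ≤ p.1 ∧ p.1 ≤ i ∧ jm s ≤ p.2 ∧ p.2 < jm (s + 1)})
    (h𝓜ℏ : 𝓜 ℏ = {p : ℕ × ℕ | im ℏ ≤ p.1 ∧ p.1 ≤ i ∧ jm ℏ ≤ p.2 ∧ p.2 ≤ j})
    (ybar : ℕ → ℕ → ℕ → V) :
    Submodule.span ℝ {v : V | ∃ s ≤ ℏ, ∃ c ≤ s, ∃ l k : ℕ,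
        (l, k) ∈ 𝒩 (ℏ - s) ∧ v = ybar c (l + im c) (k + jm c)}
      = Submodule.span ℝ {v : V | ∃ s ≤ ℏ, ∃ c ≤ s, ∃ l k : ℕ,
          (l, k) ∈ 𝓜 s ∧ v = ybar c l k} := by
  have ⟨him, hjm⟩ := monotoneOn_Iic_of_interlaced himjm fun s hs => (hjmim s hs).le
  have observations_eq := reconstructed_observations_span_eq_general
    (δ := fun s => (im s, jm s)) (h := (i, j))
    (fun _ hs _ ht hst => Prod.mk_le_mk.2 ⟨him hs ht hst, hjm hs ht hst⟩)
    (Prod.mk_le_mk.2 ⟨hi, hj⟩) (.of_reversed h𝒩0 h𝒩)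
    (isLayering_Icc_of_eq_union him hjm hi hj h𝓜lt h𝓜ℏ) fun c p => ybar c p.1 p.2
  simpa [activatedObservations] using congrArg (Submodule.span ℝ) observations_eq
end
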